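/- For complex w and σ with |Im(w)| < 1/2 and |Im(σ)| < 1/2, one has ∫_{ℝ+σ} e^{2πiwz}/cosh(πz) dz = 1/cosh(πw), where the integral is over the horizontal line ℝ + σ. -/

import Mathlib

open MeasureTheory Set Filter Topology Complex

/-- The integral of a holomorphic function over a horizontal line does not change when the line is
moved, provided the function is dominated on the strip by an integrable function of the real part
which vanishes at infinity. -/
lemma integral_add_mul_I_eq_integral_of_norm_le {f : ℂ → ℂ} {g : ℝ → ℝ} {s : ℝ}
    (hf : DifferentiableOn ℂ f (univ ×ℂ uIcc 0 s))
    (hfg : ∀ x : ℝ, ∀ y ∈ uIcc 0 s, ‖f (x + y * I)‖ ≤ g x) (hg : Integrable g)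
    (htop : Tendsto g atTop (𝓝 0)) (hbot : Tendsto g atBot (𝓝 0)) :
    ∫ x : ℝ, f (x + s * I) = ∫ x : ℝ, f x := by
  have hint : ∀ y ∈ uIcc 0 s, Integrable fun x : ℝ => f (x + y * I) := by
    intro y hy
    refine hg.mono' (Continuous.aestronglyMeasurable ?_) (ae_of_all _ fun x => hfg x y hy)
    refine hf.continuousOn.comp_continuous (by fun_prop) fun x => ?_
    simpa [mem_reProdIm] using hy
  have hvert : ∀ {l : Filter ℝ}, Tendsto g l (𝓝 0) →
      Tendsto (fun T : ℝ => ∫ y in (0 : ℝ)..s, f (T + y * I)) l (𝓝 0) := by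
    intro l hl
    refine squeeze_zero_norm (a := fun T => g T * |s - 0|) (fun T => ?_) ?_
    · exact intervalIntegral.norm_integral_le_of_norm_le_const fun y hy =>
        hfg T y (uIoc_subset_uIcc hy)
    · simpa using hl.mul_const |s - 0|
  have hrect : ∀ T : ℝ, (∫ x in -T..T, f (x + s * I)) = (∫ x in -T..T, f (x + (0 : ℝ) * I)) +
      I * (∫ y in (0 : ℝ)..s, f (T + y * I)) -
      I * (∫ y in (0 : ℝ)..s, f ((-T : ℝ) + y * I)) := by
    intro T
    have h := integral_boundary_rect_eq_zero_of_differentiableOn f (-T : ℝ) (T + s * I)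
      (hf.mono fun z hz => by
        simp only [mem_reProdIm] at hz ⊢
        simpa using hz.2)
    simp only [ofReal_re, ofReal_im, add_re, mul_re, I_re, I_im, mul_zero, mul_one, sub_zero,
      add_im, mul_im, zero_add, add_zero, smul_eq_mul] at h
    linear_combination -h
  refine tendsto_nhds_unique (intervalIntegral_tendsto_integral (hint s right_mem_uIcc)
    tendsto_neg_atTop_atBot tendsto_id) ?_
  have hlim := ((intervalIntegral_tendsto_integral (hint 0 left_mem_uIcc)
    tendsto_neg_atTop_atBot tendsto_id).add ((hvert htop).const_mul I)).sub
    (((hvert hbot).comp tendsto_neg_atTop_atBot).const_mul I)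
  simpa [hrect, Function.comp_def] using hlim

lemma abs_cos_mul_cosh_le_norm_cosh (a b : ℝ) :
    |Real.cos b| * Real.cosh a ≤ ‖cosh (a + b * I)‖ := by
  have h : (cosh (a + b * I)).re = Real.cosh a * Real.cos b := by
    rw [cosh_add, cosh_mul_I, sinh_mul_I, ← ofReal_cosh, ← ofReal_sinh, ← ofReal_cos, ← ofReal_sin]
    simp [-ofReal_cosh, -ofReal_sinh, -ofReal_cos, -ofReal_sin]
  calc |Real.cos b| * Real.cosh a = |(cosh (a + b * I)).re| := by
        rw [h, abs_mul, abs_of_pos (Real.cosh_pos a), mul_comm]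
    _ ≤ _ := abs_re_le_norm _

lemma exp_abs_le_two_mul_cosh (x : ℝ) : Real.exp |x| ≤ 2 * Real.cosh x := by
  rw [← Real.cosh_abs, Real.cosh_eq]
  linarith [Real.exp_pos (-|x|)]

/-- The logistic substitution turns the Fourier integral of `1 / cosh` into a beta integral. -/
lemma betaIntegral_half_add_half_sub (w : ℂ) :
    betaIntegral (1 / 2 + I * w) (1 / 2 - I * w) =
      Real.pi * ∫ x : ℝ, exp (2 * Real.pi * I * w * x) / cosh (Real.pi * x) := by
  have hpi := Real.pi_pos
  have himg : (fun x : ℝ => Real.sigmoid (2 * Real.pi * x)) '' univ = Ioo 0 1 := by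
    rw [image_univ, ← Real.range_sigmoid]
    exact (mul_left_surjective₀ (by positivity : 2 * Real.pi ≠ 0)).range_comp Real.sigmoid
  have hderiv : ∀ x ∈ (univ : Set ℝ), HasDerivWithinAt
      (fun x : ℝ => Real.sigmoid (2 * Real.pi * x))
      (Real.sigmoid (2 * Real.pi * x) * (1 - Real.sigmoid (2 * Real.pi * x)) * (2 * Real.pi))
      univ x := fun x _ =>
    ((Real.hasDerivAt_sigmoid _).comp x
      (by simpa using (hasDerivAt_id x).const_mul (2 * Real.pi))).hasDerivWithinAt
  have hinj : InjOn (fun x : ℝ => Real.sigmoid (2 * Real.pi * x)) univ := fun x _ y _ h =>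
    mul_left_cancel₀ (by positivity : 2 * Real.pi ≠ 0) (Real.sigmoid_injective h)
  rw [betaIntegral, intervalIntegral.integral_of_le zero_le_one, integral_Ioc_eq_integral_Ioo,
    ← himg, integral_image_eq_integral_abs_deriv_smul MeasurableSet.univ hderiv hinj,
    setIntegral_univ, ← integral_const_mul]
  congr 1 with x
  set p := Real.sigmoid (2 * Real.pi * x) with hp
  have hp0 : 0 < p := Real.sigmoid_pos _
  have hq0 : 0 < 1 - p := sub_pos.2 (Real.sigmoid_lt_one _)
  have hq : 1 - p = p * Real.exp (-(2 * Real.pi * x)) := by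
    rw [hp, Real.sigmoid_mul_rexp_neg, Real.sigmoid_neg]
  have hlog : Real.log (1 - p) = Real.log p - 2 * Real.pi * x := by
    rw [hq, Real.log_mul hp0.ne' (Real.exp_pos _).ne', Real.log_exp]
    ring
  have hpC : (p : ℂ) ≠ 0 := ofReal_ne_zero.2 hp0.ne'
  have hqC : (1 - p : ℂ) ≠ 0 := by exact_mod_cast hq0.ne'
  have hpow : (p : ℂ) ^ (1 / 2 + I * w) * (1 - p : ℂ) ^ (1 / 2 - I * w) =
      exp (2 * Real.pi * I * w * x) * (p * exp (-(Real.pi * x))) := by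
    rw [cpow_def_of_ne_zero hpC, cpow_def_of_ne_zero hqC,
      show (1 - p : ℂ) = ((1 - p : ℝ) : ℂ) by push_cast; rfl, ← ofReal_log hp0.le,
      ← ofReal_log hq0.le, hlog, ← exp_add]
    nth_rewrite 3 [← Real.exp_log hp0]
    rw [ofReal_exp, ← exp_add, ← exp_add]
    push_cast
    ring_nf
  have hcosh : (p * exp (-(Real.pi * x)) : ℂ) * (2 * cosh (Real.pi * x)) = 1 := by
    have h : (p : ℂ) + p * exp (-(2 * Real.pi * x)) = 1 := by
      have := congrArg (fun r : ℝ => (r : ℂ)) hq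
      push_cast at this
      linear_combination -this
    rw [two_cosh, mul_assoc, mul_add, ← exp_add, ← exp_add, neg_add_cancel, exp_zero, mul_add,
      mul_one, show (-(Real.pi * x) + -(Real.pi * x) : ℂ) = -(2 * Real.pi * x) by ring, h]
  have hc : cosh (Real.pi * x : ℂ) ≠ 0 := by
    rintro h
    simp [h] at hcosh
  rw [abs_of_pos (by positivity), real_smul, cpow_sub _ _ hpC, cpow_sub _ _ hqC, cpow_one,
    cpow_one]
  push_cast
  generalize (p : ℂ) ^ (1 / 2 + I * w) = P at hpow ⊢
  generalize (1 - p : ℂ) ^ (1 / 2 - I * w) = Q at hpow ⊢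
  field_simp
  linear_combination (2 * cosh (Real.pi * x) : ℂ) * hpow + exp (2 * Real.pi * I * w * x) * hcosh

lemma integral_cexp_div_cosh {w : ℂ} (hw : |w.im| < 1 / 2) :
    ∫ x : ℝ, exp (2 * Real.pi * I * w * x) / cosh (Real.pi * x) = 1 / cosh (Real.pi * w) := by
  obtain ⟨h1, h2⟩ := abs_lt.1 hw
  have hu : 0 < (1 / 2 + I * w).re := by simp; linarith
  have hv : 0 < (1 / 2 - I * w).re := by simp; linarith
  have h := betaIntegral_eq_Gamma_mul_div _ _ hu hv
  rw [betaIntegral_half_add_half_sub, show (1 / 2 - I * w) = 1 - (1 / 2 + I * w) by ring,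
    Gamma_mul_Gamma_one_sub, add_sub_cancel, Gamma_one, div_one,
    show Real.pi * (1 / 2 + I * w) = Real.pi * w * I + Real.pi / 2 by ring,
    sin_add_pi_div_two, cos_mul_I] at h
  have hpi : (Real.pi : ℂ) ≠ 0 := ofReal_ne_zero.2 Real.pi_ne_zero
  exact mul_left_cancel₀ hpi (by rw [h]; ring)

theorem stmt_6 (w σ : ℂ) (hw : |w.im| < 1/2) (hσ : |σ.im| < 1/2) :
    ∫ x : ℝ, Complex.exp (2 * Real.pi * Complex.I * w * ((x : ℂ) + σ))
        / Complex.cosh (Real.pi * ((x : ℂ) + σ))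
      = 1 / Complex.cosh (Real.pi * w) := by
  have hpi := Real.pi_pos
  set f : ℂ → ℂ := fun z => exp (2 * Real.pi * I * w * z) / cosh (Real.pi * z) with hf
  set δ : ℝ := Real.pi * (1 - 2 * |w.im|) with hδ
  have hδ0 : 0 < δ := mul_pos hpi (by linarith)
  set C : ℝ := 2 * Real.exp (Real.pi * |w.re|) / Real.cos (Real.pi * σ.im) with hC
  have hcos : 0 < Real.cos (Real.pi * σ.im) := by
    obtain ⟨h1, h2⟩ := abs_lt.1 hσ
    exact Real.cos_pos_of_mem_Ioo ⟨by nlinarith, by nlinarith⟩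
  have habs : ∀ y ∈ uIcc 0 σ.im, |y| ≤ |σ.im| := fun y hy => by
    simpa using abs_sub_left_of_mem_uIcc hy
  have hlow : ∀ x : ℝ, ∀ y ∈ uIcc 0 σ.im,
      Real.cos (Real.pi * σ.im) * (Real.exp (Real.pi * |x|) / 2) ≤
        ‖cosh (Real.pi * (x + y * I))‖ := by
    intro x y hy
    have hle : Real.cos (Real.pi * σ.im) ≤ Real.cos (Real.pi * y) := by
      rw [← Real.cos_abs, ← Real.cos_abs (Real.pi * y), abs_mul, abs_mul, abs_of_pos hpi]
      refine Real.cos_le_cos_of_nonneg_of_le_pi (by positivity) (by nlinarith) ?_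
      exact mul_le_mul_of_nonneg_left (habs y hy) hpi.le
    have h2 := exp_abs_le_two_mul_cosh (Real.pi * x)
    rw [abs_mul, abs_of_pos hpi] at h2
    calc _ ≤ |Real.cos (Real.pi * y)| * Real.cosh (Real.pi * x) := by
          gcongr
          · exact hle.trans (le_abs_self _)
          · linarith
      _ ≤ _ := by
          convert abs_cos_mul_cosh_le_norm_cosh (Real.pi * x) (Real.pi * y) using 3
          push_cast
          ring
  have hne : ∀ x : ℝ, ∀ y ∈ uIcc 0 σ.im, cosh (Real.pi * (x + y * I)) ≠ 0 := fun x y hy =>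
    norm_pos_iff.1 (lt_of_lt_of_le (by positivity) (hlow x y hy))
  have hdiff : DifferentiableOn ℂ f (univ ×ℂ uIcc 0 σ.im) := by
    intro z hz
    have hz0 := hne z.re z.im hz.2
    rw [re_add_im] at hz0
    have hexp : DifferentiableAt ℂ (fun z : ℂ => exp (2 * Real.pi * I * w * z)) z := by fun_prop
    have hcosh : DifferentiableAt ℂ (fun z : ℂ => cosh (Real.pi * z)) z := by fun_prop
    exact (hexp.div hcosh hz0).differentiableWithinAt
  have hbound : ∀ x : ℝ, ∀ y ∈ uIcc 0 σ.im, ‖f (x + y * I)‖ ≤ C * Real.exp (-δ * |x|) := by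
    intro x y hy
    have hnum : ‖exp (2 * Real.pi * I * w * (x + y * I))‖ ≤
        Real.exp (Real.pi * |w.re|) * Real.exp (2 * Real.pi * |w.im| * |x|) := by
      rw [norm_exp, ← Real.exp_add, Real.exp_le_exp]
      have hre : (2 * Real.pi * I * w * (x + y * I)).re =
          2 * Real.pi * (-(w.re * y)) + 2 * Real.pi * (-(w.im * x)) := by
        simp
        ring
      have h1 : -(w.re * y) ≤ |w.re| * (1 / 2) := by
        refine (neg_le_abs _).trans ?_
        rw [abs_mul]
        exact mul_le_mul_of_nonneg_left ((habs y hy).trans hσ.le) (abs_nonneg _)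
      have h2 : -(w.im * x) ≤ |w.im| * |x| := by
        rw [← abs_mul]
        exact neg_le_abs _
      rw [hre]
      nlinarith
    calc ‖f (x + y * I)‖ ≤ Real.exp (Real.pi * |w.re|) * Real.exp (2 * Real.pi * |w.im| * |x|) /
          (Real.cos (Real.pi * σ.im) * (Real.exp (Real.pi * |x|) / 2)) := by
          rw [hf, norm_div]
          exact div_le_div₀ (by positivity) hnum (by positivity) (hlow x y hy)
      _ = C * Real.exp (-δ * |x|) := by
          rw [show -δ * |x| = 2 * Real.pi * |w.im| * |x| - Real.pi * |x| by rw [hδ]; ring,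
            Real.exp_sub, hC]
          field_simp
  have hint : Integrable fun x : ℝ => C * Real.exp (-δ * |x|) := by
    refine Integrable.const_mul ?_ C
    rw [← integrableOn_univ, ← Iic_union_Ioi (a := (0 : ℝ))]
    refine IntegrableOn.union ?_ ?_
    · refine (integrableOn_exp_mul_Iic hδ0 0).congr_fun (fun x hx => ?_) measurableSet_Iic
      simp [abs_of_nonpos (mem_Iic.1 hx)]
    · refine (integrableOn_exp_mul_Ioi (neg_neg_of_pos hδ0) 0).congr_fun (fun x hx => ?_)
        measurableSet_Ioi
      simp [abs_of_pos (mem_Ioi.1 hx)]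
  have htend : ∀ {l : Filter ℝ}, Tendsto (fun x : ℝ => |x|) l atTop →
      Tendsto (fun x : ℝ => C * Real.exp (-δ * |x|)) l (𝓝 0) := fun hl => by
    simpa using (Real.tendsto_exp_atBot.comp
      (hl.const_mul_atTop_of_neg (neg_neg_of_pos hδ0))).const_mul C
  calc ∫ x : ℝ, f (x + σ) = ∫ x : ℝ, f ((x + σ.re : ℝ) + σ.im * I) := by
        congr 1 with x
        rw [ofReal_add, add_assoc, re_add_im]
    _ = ∫ x : ℝ, f (x + σ.im * I) :=
        integral_add_right_eq_self (fun x : ℝ => f (x + σ.im * I)) σ.re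
    _ = ∫ x : ℝ, f x := integral_add_mul_I_eq_integral_of_norm_le hdiff hbound hint
        (htend tendsto_abs_atTop_atTop) (htend tendsto_abs_atBot_atTop)
    _ = 1 / cosh (Real.pi * w) := integral_cexp_div_cosh hw
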